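/- arXiv:1803.08273 — 3 statements merged into one kernel-verified Lean document; each statement's English description precedes it below -/
import Mathlib

section
/- Let F and E be finite-dimensional complex inner product spaces, let T : F → E be a continuous linear map whose adjoint T† satisfies T† ∘ T = id_F, and let S : E → E be a continuous linear map satisfying S ∘ S = id_E. Let λ, Λ be real numbers with Λ ≠ 0, and let v ∈ F satisfy T†(S(T v)) = (λ/Λ) • v. Define U : E → E by U x = i • S(2 • T(T†(x)) − x), and let μ ∈ ℂ satisfy μ² = 1 + (2iλ/Λ)·μ. Then the vector w = T v + (i·μ) • S(T v) satisfies U w = μ • w. -/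
/-- Eigenvalue relation for the quantum walk operator `U = iS(2TT† − I)`: if `T† T = id`,
`S S = id`, `T† S T v = (λ/Λ) v` and `μ² = 1 + (2iλ/Λ) μ`, then
`w = T v + iμ S T v` satisfies `U w = μ w`. -/
theorem quantum_walk_eigenvalue
    {F E : Type*}
    [NormedAddCommGroup F] [InnerProductSpace ℂ F] [FiniteDimensional ℂ F]
    [NormedAddCommGroup E] [InnerProductSpace ℂ E] [FiniteDimensional ℂ E]
    (T : F →L[ℂ] E) (S : E →L[ℂ] E)
    (hT : (ContinuousLinearMap.adjoint T).comp T = ContinuousLinearMap.id ℂ F)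
    (hS : S.comp S = ContinuousLinearMap.id ℂ E)
    (lam Lam : ℝ) (hLam : Lam ≠ 0) (v : F)
    (hv : (ContinuousLinearMap.adjoint T) (S (T v)) = ((lam / Lam : ℝ) : ℂ) • v)
    (μ : ℂ) (hμ : μ ^ 2 = 1 + (2 * Complex.I * (lam : ℂ) / (Lam : ℂ)) * μ)
    (w : E) (hw : w = T v + (Complex.I * μ) • S (T v)) :
    Complex.I • S ((2 : ℂ) • T ((ContinuousLinearMap.adjoint T) w) - w) = μ • w := by
  have h1 : (ContinuousLinearMap.adjoint T) (T v) = v := by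
    simpa using congrArg (fun f => f v) hT
  have h2 : S (S (T v)) = T v := by
    simpa using congrArg (fun f => f (T v)) hS
  subst hw
  simp only [map_add, map_sub, map_smul, h1, h2, hv]
  push_cast
  match_scalars
  · linear_combination (-Complex.I) * hμ
  · linear_combination (-μ) * Complex.I_sq
end

section
/- Let A be a real number with A ≥ 16 and let k be a natural number with (k : ℝ) ≥ 2·log(A)/log(log(A)), where log denotes the natural logarithm. Then A ≤ 4^k · k!. -/
/-- Quantitative factorial growth: if `A ≥ 16` and `k ≥ 2 log A / log log A`, then
`A ≤ 4^k k!`. -/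
theorem factorial_growth_bound (A : ℝ) (hA : 16 ≤ A) (k : ℕ)
    (hk : 2 * Real.log A / Real.log (Real.log A) ≤ (k : ℝ)) :
    A ≤ 4 ^ k * (Nat.factorial k : ℝ) := by
  have hA0 : 0 < A := by linarith
  have hL : 1 < Real.log A := by
    rw [Real.lt_log_iff_exp_lt hA0]
    linarith [Real.exp_one_lt_d9]
  have hl : 0 < Real.log (Real.log A) := Real.log_pos hL
  have hAL : A = Real.exp (Real.log A) := (Real.exp_log hA0).symm
  generalize Real.log A = L at *
  have hL0 : 0 < L := by linarith
  have hq : 0 < 2 * L / Real.log L := by positivity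
  have hk0 : (0 : ℝ) < k := hq.trans_le hk
  have h1 : Real.log (2 * L / Real.log L) ≤ Real.log k := Real.log_le_log hq hk
  rw [Real.log_div (by positivity) hl.ne', Real.log_mul (by norm_num) hL0.ne'] at h1
  have h2 := Real.log_le_sub_one_of_pos (half_pos hl)
  rw [Real.log_div hl.ne' (by norm_num)] at h2
  have h3 : L ≤ k * (Real.log L / 2) := by
    rw [div_le_iff₀ hl] at hk
    linarith
  have h4 : 0 < Real.log 4 := Real.log_pos (by norm_num)
  have h5 : L ≤ k * (Real.log 4 + Real.log k) - k := by nlinarith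
  have h6 := Real.pow_div_factorial_le_exp (x := (k : ℝ)) hk0.le k
  have hf : (0 : ℝ) < Nat.factorial k := by positivity
  rw [div_le_iff₀ hf] at h6
  have h7 : Real.exp (k * (Real.log 4 + Real.log k)) = 4 ^ k * (k : ℝ) ^ k := by
    rw [Real.exp_nat_mul, Real.exp_add, Real.exp_log (by norm_num), Real.exp_log hk0, mul_pow]
  calc A = Real.exp L := hAL
    _ ≤ Real.exp (k * (Real.log 4 + Real.log k) - k) := Real.exp_le_exp.mpr h5
    _ = 4 ^ k * (k : ℝ) ^ k / Real.exp k := by rw [Real.exp_sub, h7]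
    _ ≤ 4 ^ k * (Nat.factorial k : ℝ) := by
      rw [div_le_iff₀ (Real.exp_pos _), mul_assoc, mul_comm (Nat.factorial k : ℝ)]
      gcongr
end

section
/- Let E and V be finite-dimensional complex inner product spaces, ι : V → E a linear isometry, and P = ι ∘ ι† the orthogonal projection of E onto the range of ι. Let W : E → E be a unitary continuous linear map, let Ṽ and V' be continuous linear maps on V with V' unitary, let ε ≥ 0 with ‖Ṽ − V'‖ ≤ ε (operator norm), and suppose that for every ψ ∈ V, P(W(ι ψ)) = (1/2) • ι(Ṽ ψ). Then for every unit vector ψ ∈ V, ‖(−W ∘ (id − 2P) ∘ W† ∘ (id − 2P) ∘ W)(ι ψ) − ι(V' ψ)‖ ≤ 3ε + ε². -/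
/-- Robust oblivious amplitude amplification: if the `P`-projected action of the unitary `W`
implements `(1/2) Ṽ` on the image of the isometry `ι`, where `Ṽ` is `ε`-close in operator
norm to a unitary `V'`, then one round of `−W(I−2P)W†(I−2P)W` implements `V'` up to
error `3ε + ε²` on unit vectors. -/
theorem oblivious_amplitude_amplification
    {E V : Type*}
    [NormedAddCommGroup E] [InnerProductSpace ℂ E] [FiniteDimensional ℂ E]
    [NormedAddCommGroup V] [InnerProductSpace ℂ V] [FiniteDimensional ℂ V]
    (ι : V →ₗᵢ[ℂ] E)
    (P : E →L[ℂ] E)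
    (hP : P = ι.toContinuousLinearMap.comp
        (ContinuousLinearMap.adjoint ι.toContinuousLinearMap))
    (W : E →L[ℂ] E)
    (hW : (ContinuousLinearMap.adjoint W).comp W = ContinuousLinearMap.id ℂ E ∧
          W.comp (ContinuousLinearMap.adjoint W) = ContinuousLinearMap.id ℂ E)
    (Vt V' : V →L[ℂ] V)
    (hV' : (ContinuousLinearMap.adjoint V').comp V' = ContinuousLinearMap.id ℂ V ∧
           V'.comp (ContinuousLinearMap.adjoint V') = ContinuousLinearMap.id ℂ V)
    (ε : ℝ) (hε : 0 ≤ ε) (hVV : ‖Vt - V'‖ ≤ ε)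
    (hblock : ∀ ψ : V, P (W (ι ψ)) = (1 / 2 : ℂ) • ι (Vt ψ)) :
    ∀ ψ : V, ‖ψ‖ = 1 →
      ‖-(W ((ContinuousLinearMap.id ℂ E - (2 : ℂ) • P)
            ((ContinuousLinearMap.adjoint W)
              ((ContinuousLinearMap.id ℂ E - (2 : ℂ) • P) (W (ι ψ))))))
          - ι (V' ψ)‖ ≤ 3 * ε + ε ^ 2 := by
  intro ψ hψ
  have hW1 : ∀ x, (ContinuousLinearMap.adjoint W) (W x) = x := fun x => by
    simpa using DFunLike.congr_fun hW.1 x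
  have hW2 : ∀ x, W ((ContinuousLinearMap.adjoint W) x) = x := fun x => by
    simpa using DFunLike.congr_fun hW.2 x
  have hV1 : ∀ x, (ContinuousLinearMap.adjoint V') (V' x) = x := fun x => by
    simpa using DFunLike.congr_fun hV'.1 x
  have hV2 : ∀ x, V' ((ContinuousLinearMap.adjoint V') x) = x := fun x => by
    simpa using DFunLike.congr_fun hV'.2 x
  have nW : ∀ x, ‖W x‖ = ‖x‖ :=
    (ContinuousLinearMap.norm_map_iff_adjoint_comp_self W).2 hW.1
  have nV : ∀ x, ‖V' x‖ = ‖x‖ :=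
    (ContinuousLinearMap.norm_map_iff_adjoint_comp_self V').2 hV'.1
  have nVa : ∀ x, ‖(ContinuousLinearMap.adjoint V') x‖ = ‖x‖ := fun x => by
    rw [← nV, hV2]
  have hPa : ∀ x, P x = ι ((ContinuousLinearMap.adjoint ι.toContinuousLinearMap) x) := fun x => by
    rw [hP]; rfl
  have hιι : ∀ x : V, (ContinuousLinearMap.adjoint ι.toContinuousLinearMap) (ι x) = x := by
    intro x
    refine ext_inner_right ℂ fun y => ?_
    rw [ContinuousLinearMap.adjoint_inner_left]
    exact ι.inner_map_map x y
  have hPι : ∀ x : V, P (ι x) = ι x := fun x => by rw [hPa, hιι]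
  have hb : ∀ x : V, (ContinuousLinearMap.adjoint ι.toContinuousLinearMap) (W (ι x))
      = (1 / 2 : ℂ) • Vt x := by
    intro x
    apply ι.injective
    rw [← hPa, hblock, map_smul]
  have hPW : ∀ x : V, P ((ContinuousLinearMap.adjoint W) (ι x))
      = (1 / 2 : ℂ) • ι ((ContinuousLinearMap.adjoint Vt) x) := by
    intro x
    rw [hPa, ← map_smul]
    congr 1
    refine ext_inner_right ℂ fun y => ?_
    rw [ContinuousLinearMap.adjoint_inner_left, ContinuousLinearMap.adjoint_inner_left,
      inner_smul_left, ContinuousLinearMap.adjoint_inner_left]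
    have h1 : inner ℂ (ι x) (W (ι y))
        = inner ℂ x ((ContinuousLinearMap.adjoint ι.toContinuousLinearMap) (W (ι y))) := by
      rw [ContinuousLinearMap.adjoint_inner_right]; rfl
    refine Eq.trans h1 ?_
    rw [hb, inner_smul_right]
    simp
    exact Or.inl (Complex.conj_ofNat 2).symm
  have key : -(W ((ContinuousLinearMap.id ℂ E - (2 : ℂ) • P)
            ((ContinuousLinearMap.adjoint W)
              ((ContinuousLinearMap.id ℂ E - (2 : ℂ) • P) (W (ι ψ))))))
          - ι (V' ψ) = ι ((Vt - V') ψ)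
            - W (ι ((ContinuousLinearMap.adjoint Vt) (Vt ψ) - ψ)) := by
    simp only [ContinuousLinearMap.sub_apply, ContinuousLinearMap.smul_apply,
      ContinuousLinearMap.id_apply, map_sub, map_smul, hblock, hPW, hW1, hW2, hPι]
    module
  have hD : ∀ x, ‖(Vt - V') x‖ ≤ ε * ‖x‖ := fun x => (Vt - V').le_of_opNorm_le hVV x
  have hDa : ∀ x, ‖(ContinuousLinearMap.adjoint (Vt - V')) x‖ ≤ ε * ‖x‖ := fun x =>
    ContinuousLinearMap.le_of_opNorm_le _
      (by rw [LinearIsometryEquiv.norm_map]; exact hVV) x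
  have hVt : ‖Vt ψ‖ ≤ 1 + ε := by
    have h : Vt ψ = V' ψ + (Vt - V') ψ := by simp
    rw [h]
    refine (norm_add_le _ _).trans ?_
    have := hD ψ
    rw [hψ] at this
    rw [nV, hψ]
    linarith
  have e2 : (ContinuousLinearMap.adjoint Vt) (Vt ψ) - ψ
      = (ContinuousLinearMap.adjoint (Vt - V')) (Vt ψ)
        + (ContinuousLinearMap.adjoint V') ((Vt - V') ψ) := by
    simp [map_sub, hV1]
  have b0 := hD ψ
  rw [hψ] at b0
  have b1 : ‖(ContinuousLinearMap.adjoint Vt) (Vt ψ) - ψ‖ ≤ ε * (1 + ε) + ε := by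
    rw [e2]
    refine (norm_add_le _ _).trans ?_
    rw [nVa]
    have h1 := hDa (Vt ψ)
    have h2 := mul_le_mul_of_nonneg_left hVt hε
    linarith
  rw [key]
  refine (norm_sub_le _ _).trans ?_
  rw [nW, ι.norm_map, ι.norm_map]
  nlinarith
end
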